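/- Let L be a 2-trivial Lie algebra over a field K of characteristic zero satisfying [L,L] = L. Then L is semisimple. -/

import Mathlib

universe u v

section TwoCohomology

variable (K : Type u) [Field K]
variable (L : Type v) [LieRing L] [LieAlgebra K L]

/-- `f` is an alternating bilinear 2-cocycle on `L` with values in the `L`-module `V`:
it satisfies `f a a = 0` and the Chevalley–Eilenberg 2-cocycle identity. -/
def IsLieTwoCocycle {V : Type*} [AddCommGroup V] [Module K V] [LieRingModule L V]
    (f : L →ₗ[K] L →ₗ[K] V) : Prop :=
  (∀ a : L, f a a = 0) ∧
    ∀ x y z : L,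
      ⁅x, f y z⁆ - ⁅y, f x z⁆ + ⁅z, f x y⁆ - f ⁅x, y⁆ z + f ⁅x, z⁆ y - f ⁅y, z⁆ x = 0

/-- `f` is a 2-coboundary: `f (x, y) = x · g y − y · g x − g ⁅x, y⁆` for some linear `g`. -/
def IsLieTwoCoboundary {V : Type*} [AddCommGroup V] [Module K V] [LieRingModule L V]
    (f : L →ₗ[K] L →ₗ[K] V) : Prop :=
  ∃ g : L →ₗ[K] V, ∀ x y : L, f x y = ⁅x, g y⁆ - ⁅y, g x⁆ - g ⁅x, y⁆

/-- A finite-dimensional Lie algebra `L` is 2-trivial if `H²(L,V) = 0`, i.e. every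
alternating 2-cocycle is a 2-coboundary, for every finite-dimensional `L`-module `V`. -/
def IsTwoTrivial : Prop :=
  ∀ (V : Type u) [AddCommGroup V] [Module K V] [LieRingModule L V] [LieModule K L V]
    [FiniteDimensional K V] (f : L →ₗ[K] L →ₗ[K] V),
      IsLieTwoCocycle K L f → IsLieTwoCoboundary K L f

end TwoCohomology


section Whitehead
set_option linter.unusedSectionVars false
set_option linter.unusedSimpArgs false
set_option linter.unusedTactic false


open LieModule LieAlgebra Module

variable {K : Type*} [Field K] {S : Type*} [LieRing S] [LieAlgebra K S]
variable {V : Type*} [AddCommGroup V] [Module K V] [LieRingModule S V] [LieModule K S V]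

/-- The Casimir-type operator attached to two families. -/
def casOp {ι : Type*} [Fintype ι] (e e' : ι → S) : V →ₗ[K] V :=
  ∑ i, (toEnd K S V (e i)) ∘ₗ (toEnd K S V (e' i))

lemma casOp_apply {ι : Type*} [Fintype ι] (e e' : ι → S) (v : V) :
    casOp (K := K) e e' v = ∑ i, ⁅e i, ⁅e' i, v⁆⁆ := by
  simp [casOp]

/-- Invariance of the tensor `∑ e i ⊗ e' i`, tested on bilinear maps. -/
def InvTensor (K : Type*) [Field K] {S : Type*} [LieRing S] [LieAlgebra K S]
    (V : Type*) [AddCommGroup V] [Module K V]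
    {ι : Type*} [Fintype ι] (e e' : ι → S) : Prop :=
  ∀ (B : S →ₗ[K] S →ₗ[K] V) (x : S), ∑ i, (B ⁅e i, x⁆ (e' i) + B (e i) ⁅e' i, x⁆) = 0

lemma casOp_comm {ι : Type*} [Fintype ι] (e e' : ι → S) (h : InvTensor K V e e') (x : S) (v : V) :
    casOp (K := K) e e' ⁅x, v⁆ = ⁅x, casOp (K := K) e e' v⁆ := by
  let B : S →ₗ[K] S →ₗ[K] V := LinearMap.mk₂ K (fun a b => ⁅a, ⁅b, v⁆⁆)
    (by intros; simp) (by intros; simp) (by intros; simp) (by intros; simp)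
  have := h B x
  simp only [B, LinearMap.mk₂_apply] at this
  rw [casOp_apply, casOp_apply, ← sub_eq_zero, lie_sum, ← Finset.sum_sub_distrib, ← this]
  refine Finset.sum_congr rfl fun i _ => ?_
  simp only [lie_lie, lie_sub]
  abel

lemma casOp_cobdry {ι : Type*} [Fintype ι] (e e' : ι → S) (h : InvTensor K V e e')
    (f : S →ₗ[K] S →ₗ[K] V) (hf : IsLieTwoCocycle K S f) :
    ∃ g : S →ₗ[K] V, ∀ x y, casOp (K := K) e e' (f x y) = ⁅x, g y⁆ - ⁅y, g x⁆ - g ⁅x, y⁆ := by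
  have halt : ∀ a b, f a b = - f b a := by
    intro a b
    have := hf.1 (a + b)
    simp only [map_add, LinearMap.add_apply, hf.1, zero_add, add_zero] at this
    exact eq_neg_of_add_eq_zero_right this
  refine ⟨∑ i, (toEnd K S V (e i)) ∘ₗ (f (e' i)), fun x y => ?_⟩
  let B (y : S) : S →ₗ[K] S →ₗ[K] V := LinearMap.mk₂ K (fun a b => ⁅a, f b y⁆)
    (by intros; simp) (by intros; simp) (by intros; simp) (by intros; simp)
  have h1 := h (B y) x
  have h2 := h (B x) y
  simp only [B, LinearMap.mk₂_apply] at h1 h2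
  rw [casOp_apply]
  simp only [LinearMap.sum_apply, LinearMap.comp_apply, toEnd_apply_apply, lie_sum]
  rw [← sub_eq_zero, ← Finset.sum_sub_distrib, ← Finset.sum_sub_distrib, ← Finset.sum_sub_distrib]
  have h12 := congrArg₂ (· - ·) h1 h2
  simp only [sub_zero] at h12
  rw [← Finset.sum_sub_distrib] at h12
  refine Eq.trans ?_ h12
  refine Finset.sum_congr rfl fun i _ => ?_
  have hc := congrArg (fun t => ⁅e i, t⁆) (hf.2 (e' i) x y)
  simp only [lie_sub, lie_add, lie_zero] at hc
  rw [halt ⁅x, y⁆ (e' i), lie_neg] at hc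
  rw [← sub_eq_zero, ← hc]
  simp only [lie_lie]
  abel

lemma invTensor_of_nondeg [FiniteDimensional K S] {W : Type*} [AddCommGroup W] [Module K W]
    (J : LieIdeal K S)
    (hJ : ((traceForm K S V).restrict J.toSubmodule).Nondegenerate) :
    ∃ (ι : Type) (_ : Fintype ι) (e e' : ι → S), InvTensor K W e e' ∧
      (∑ i, traceForm K S V (e i) (e' i) = finrank K J) := by
  classical
  let β := (traceForm K S V).restrict J.toSubmodule
  let b := finBasis K J.toSubmodule
  let b' := LinearMap.BilinForm.dualBasis β hJ b
  have hsymm : LinearMap.BilinForm.IsSymm β := ⟨fun x y => traceForm_comm K S V x y⟩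
  refine ⟨Fin (finrank K J.toSubmodule), inferInstance, fun i => (b i : S), fun i => (b' i : S),
    ?_, ?_⟩
  · intro B x
    -- expansions
    have h1 : ∀ v : J.toSubmodule, v = ∑ j, β v (b' j) • b j := by
      intro v
      conv_lhs => rw [← (b.sum_repr v)]
      refine Finset.sum_congr rfl fun j _ => ?_
      congr 1
      have : b = LinearMap.BilinForm.dualBasis β hJ b' :=
        (LinearMap.BilinForm.dualBasis_dualBasis hJ hsymm b).symm
      conv_lhs => rw [this]
      rw [LinearMap.BilinForm.dualBasis_repr_apply]
    have h2 : ∀ v : J.toSubmodule, v = ∑ j, β v (b j) • b' j := by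
      intro v
      conv_lhs => rw [← (b'.sum_repr v)]
      refine Finset.sum_congr rfl fun j _ => ?_
      congr 1
      rw [LinearMap.BilinForm.dualBasis_repr_apply]
    have m1 : ∀ v : J.toSubmodule, ⁅(v : S), x⁆ ∈ J.toSubmodule := fun v =>
      lie_mem_left K S J _ _ v.2
    have e1 : ∀ i, ⁅(b i : S), x⁆ = ∑ j, traceForm K S V ⁅(b i : S), x⁆ (b' j) • (b j : S) := by
      intro i
      have := congrArg (fun t : J.toSubmodule => (t : S)) (h1 ⟨_, m1 (b i)⟩)
      simpa [β] using this
    have e2 : ∀ i, ⁅(b' i : S), x⁆ = ∑ j, traceForm K S V ⁅(b' i : S), x⁆ (b j) • (b' j : S) := by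
      intro i
      have := congrArg (fun t : J.toSubmodule => (t : S)) (h2 ⟨_, m1 (b' i)⟩)
      simpa [β] using this
    rw [Finset.sum_add_distrib]
    have s1 : ∑ i, B ⁅(b i : S), x⁆ (b' i) =
        ∑ i, ∑ j, traceForm K S V ⁅(b i : S), x⁆ (b' j) • B (b j) (b' i) := by
      refine Finset.sum_congr rfl fun i _ => ?_
      conv_lhs => rw [e1 i]
      simp
    have s2 : ∑ i, B (b i) ⁅(b' i : S), x⁆ =
        ∑ i, ∑ j, traceForm K S V ⁅(b' i : S), x⁆ (b j) • B (b i) (b' j) := by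
      refine Finset.sum_congr rfl fun i _ => ?_
      conv_lhs => rw [e2 i]
      simp
    rw [s1, s2, Finset.sum_comm, ← Finset.sum_add_distrib]
    refine Finset.sum_eq_zero fun i _ => ?_
    rw [← Finset.sum_add_distrib]
    refine Finset.sum_eq_zero fun j _ => ?_
    rw [← add_smul]
    convert zero_smul K _
    rw [traceForm_apply_lie_apply, traceForm_comm K S V ⁅(b' i : S), x⁆ (b j),
      ← lie_skew, map_neg, neg_add_cancel]
  · have : ∀ i, traceForm K S V (b i) (b' i) = 1 := by
      intro i
      have := LinearMap.BilinForm.apply_dualBasis_right hJ hsymm b i i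
      simpa [β] using this
    simp only [this, Finset.sum_const, Finset.card_univ, Fintype.card_fin, nsmul_eq_mul, mul_one]
    rfl

lemma wh2_trivial [FiniteDimensional K S] [FiniteDimensional K V] [IsKilling K S]
    (htriv : ∀ (x : S) (v : V), ⁅x, v⁆ = 0)
    (f : S →ₗ[K] S →ₗ[K] V) (hf : IsLieTwoCocycle K S f) : IsLieTwoCoboundary K S f := by
  have halt : ∀ a b, f a b = - f b a := by
    intro a b
    have := hf.1 (a + b)
    simp only [map_add, LinearMap.add_apply, hf.1, zero_add, add_zero] at this
    exact eq_neg_of_add_eq_zero_right this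
  have hκ := IsKilling.killingForm_nondegenerate K S
  have hf2 : ∀ a b y, - f ⁅a, b⁆ y + f ⁅a, y⁆ b - f ⁅b, y⁆ a = 0 := by
    intro a b y
    have := hf.2 a b y
    simpa only [htriv, sub_zero, add_zero, zero_sub, zero_add] using this
  -- scalar version
  have key : ∀ φ : V →ₗ[K] K, ∃ μ : S →ₗ[K] K, ∀ x y, φ (f x y) = - μ ⁅x, y⁆ := by
    intro φ
    let D0 : S →ₗ[K] S := (LinearMap.BilinForm.toDual (killingForm K S) hκ).symm.toLinearMap ∘ₗ
      (f.compr₂ φ)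
    have hD0 : ∀ x y, killingForm K S (D0 x) y = φ (f x y) := by
      intro x y
      simp only [D0, LinearMap.comp_apply, LinearEquiv.coe_coe]
      rw [LinearMap.BilinForm.apply_toDual_symm_apply]
      rfl
    let D : LieDerivation K S S := ⟨D0, by
      intro a b
      have hinj : Function.Injective (killingForm K S) :=
        LinearMap.ker_eq_bot.mp (IsKilling.ker_killingForm_eq_bot K S)
      apply hinj
      ext y
      rw [map_sub, LinearMap.sub_apply, hD0, traceForm_apply_lie_apply',
        traceForm_apply_lie_apply', hD0, hD0, halt b, halt a]
      have := congrArg φ (hf2 a b y)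
      simp only [map_sub, map_add, map_neg, map_zero] at this ⊢
      linear_combination -this⟩
    obtain ⟨d, hd⟩ := LieDerivation.IsKilling.exists_eq_ad D
    refine ⟨-killingForm K S d, fun x y => ?_⟩
    rw [← hD0]
    have : D0 x = ⁅d, x⁆ := by
      have := congrArg (fun E : LieDerivation K S S => E x) hd
      simpa [D] using this.symm
    rw [this, traceForm_apply_lie_apply]
    simp
  let b := finBasis K V
  choose μ hμ using fun i => key (b.coord i)
  refine ⟨∑ i, (LinearMap.toSpanSingleton K V (b i)) ∘ₗ μ i, fun x y => ?_⟩
  rw [htriv, htriv, sub_zero, zero_sub]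
  conv_lhs => rw [← b.sum_repr (f x y)]
  rw [LinearMap.sum_apply, ← Finset.sum_neg_distrib]
  refine Finset.sum_congr rfl fun i _ => ?_
  have := hμ i x y
  simp only [Basis.coord_apply] at this
  rw [this]
  simp

lemma cocycle_ext {W : LieSubmodule K S V}
    (h1 : ∀ f : S →ₗ[K] S →ₗ[K] W, IsLieTwoCocycle K S f → IsLieTwoCoboundary K S f)
    (h2 : ∀ f : S →ₗ[K] S →ₗ[K] (V ⧸ W), IsLieTwoCocycle K S f → IsLieTwoCoboundary K S f)
    (f : S →ₗ[K] S →ₗ[K] V) (hf : IsLieTwoCocycle K S f) : IsLieTwoCoboundary K S f := by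
  let q := LieSubmodule.Quotient.mk' W
  obtain ⟨gb, hgb⟩ := h2 (f.compr₂ (q : V →ₗ[K] V ⧸ W)) (by
    refine ⟨fun a => ?_, fun x y z => ?_⟩
    · simp [hf.1]
    · have := congrArg q (hf.2 x y z)
      simpa only [map_sub, map_add, LieModuleHom.map_lie, map_zero] using! this)
  obtain ⟨s, hs⟩ := (q : V →ₗ[K] V ⧸ W).exists_rightInverse_of_surjective
    (LinearMap.range_eq_top.mpr (LieSubmodule.Quotient.surjective_mk' W))
  have hs' : ∀ v, q (s v) = v := fun v => congrArg (fun t => t v) hs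
  let g : S →ₗ[K] V := s ∘ₗ gb
  let f' : S →ₗ[K] S →ₗ[K] V := f - LinearMap.mk₂ K (fun x y => ⁅x, g y⁆ - ⁅y, g x⁆ - g ⁅x, y⁆)
    (by intros; simp; abel) (by intros; simp [smul_sub]) (by intros; simp; abel)
    (by intros; simp [smul_sub])
  have hf' : ∀ x y, f' x y = f x y - (⁅x, g y⁆ - ⁅y, g x⁆ - g ⁅x, y⁆) := fun x y => rfl
  have hmem : ∀ x y, f' x y ∈ W := by
    intro x y
    rw [← LieSubmodule.Quotient.mk_eq_zero, hf']
    have := hgb x y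
    change q _ = 0
    simp only [map_sub, LieModuleHom.map_lie, g, LinearMap.comp_apply, hs']
    rw [← this]
    exact sub_self _
  let fW : S →ₗ[K] S →ₗ[K] W := LinearMap.mk₂ K (fun x y => ⟨f' x y, hmem x y⟩)
    (by intros; ext; simp) (by intros; ext; simp) (by intros; ext; simp) (by intros; ext; simp)
  have hfW : ∀ x y, ((fW x y : W) : V) = f' x y := fun x y => rfl
  obtain ⟨g', hg'⟩ := h1 fW (by
    refine ⟨fun a => ?_, fun x y z => ?_⟩
    · ext; rw [hfW, hf', hf.1]; simp
    · ext
      have := hf.2 x y z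
      push_cast
      simp only [hfW, hf']
      simp only [LieSubmodule.coe_zero, lie_sub, lie_lie, map_sub, lie_add]
      rw [← this]
      have hz1 : ⁅z, y⁆ = - ⁅y, z⁆ := (lie_skew _ _).symm
      have hz2 : ⁅z, x⁆ = - ⁅x, z⁆ := (lie_skew _ _).symm
      have hz3 : ⁅y, x⁆ = - ⁅x, y⁆ := (lie_skew _ _).symm
      have hj : ⁅z, ⁅x, y⁆⁆ = - ⁅x, ⁅y, z⁆⁆ + ⁅y, ⁅x, z⁆⁆ := by
        rw [leibniz_lie z x y, hz2, hz1, neg_lie, lie_neg, ← lie_skew y ⁅x, z⁆]; abel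
      simp only [hz1, hz2, hz3, lie_neg, hj, map_neg, map_add]
      abel)
  refine ⟨g + (W.toSubmodule.subtype ∘ₗ g'), fun x y => ?_⟩
  have := congrArg (fun t : W => (t : V)) (hg' x y)
  simp only [hfW, hf'] at this
  rw [LieSubmodule.coe_sub, LieSubmodule.coe_sub] at this
  simp only [LieSubmodule.coe_bracket] at this
  simp only [LinearMap.add_apply, LinearMap.comp_apply, Submodule.subtype_apply, lie_add]
  rw [sub_eq_iff_eq_add] at this
  rw [this]
  abel

theorem wh2 [CharZero K] [FiniteDimensional K S] [HasTrivialRadical K S] :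
    ∀ (n : ℕ) (V : Type*) [AddCommGroup V] [Module K V] [LieRingModule S V] [LieModule K S V]
    [FiniteDimensional K V], finrank K V = n → ∀ 
    (f : S →ₗ[K] S →ₗ[K] V), IsLieTwoCocycle K S f → IsLieTwoCoboundary K S f := by
  intro n
  induction n using Nat.strong_induction_on with
  | _ n ih =>
  intro V _ _ _ _ _ hn f hf
  by_cases hW : ∃ W : LieSubmodule K S V, W ≠ ⊥ ∧ W ≠ ⊤
  · obtain ⟨W, hb, ht⟩ := hW
    have hb' : W.toSubmodule ≠ ⊥ := by simpa using hb
    have ht' : W.toSubmodule ≠ ⊤ := by simpa using ht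
    have d1 : finrank K W < n := hn ▸ Submodule.finrank_lt ht'
    have d2 : finrank K (V ⧸ W) < n := by
      have h := Submodule.finrank_quotient_add_finrank W.toSubmodule
      have hp : 0 < finrank K W.toSubmodule := by
        rw [Module.finrank_pos_iff, Submodule.nontrivial_iff_ne_bot]; exact hb'
      change finrank K (V ⧸ W.toSubmodule) < n
      omega
    exact cocycle_ext (W := W) (ih _ d1 W rfl) (ih _ d2 (V ⧸ W) rfl) f hf
  push Not at hW
  -- the radical of the trace form
  let 𝔨 : LieIdeal K S :=
    { LinearMap.ker (traceForm K S V) with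
      lie_mem := by
        intro x m hm
        change traceForm K S V m = 0 at hm
        change traceForm K S V ⁅x, m⁆ = 0
        ext y
        rw [traceForm_apply_lie_apply', hm]; simp }
  have h𝔨 : ∀ x, x ∈ 𝔨 ↔ traceForm K S V x = 0 := fun x => Iff.rfl
  by_cases hk : 𝔨 = ⊤
  · -- trivial action
    have h0 : traceForm K S V = 0 := by
      ext x y
      have : x ∈ 𝔨 := hk ▸ LieSubmodule.mem_top x
      rw [(h𝔨 x).1 this]; rfl
    have hnil := isNilpotent_derivedSeries_of_traceForm_eq_zero h0
    have hD : derivedSeries K S 1 = ⊤ := by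
      have hcD := LieIdeal.isCompl_killingCompl (derivedSeries K S 1)
      have : (derivedSeries K S 1).killingCompl = ⊥ := by
        rw [eq_bot_iff, ← center_eq_bot K S]
        intro x hx
        rw [LieIdeal.mem_killingCompl] at hx
        rw [LieModule.mem_maxTrivSubmodule]
        intro a
        have hinj : Function.Injective (killingForm K S) :=
          LinearMap.ker_eq_bot.mp (IsKilling.ker_killingForm_eq_bot K S)
        apply hinj
        rw [map_zero]
        ext b
        rw [traceForm_apply_lie_apply', traceForm_comm, hx, neg_zero]
        · rfl
        · exact LieSubmodule.lie_mem_lie (LieSubmodule.mem_top _) (LieSubmodule.mem_top _)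
      rw [this] at hcD
      simpa using hcD.sup_eq_top
    apply wh2_trivial _ f hf
    intro x v
    rcases subsingleton_or_nontrivial V with hV | hV
    · exact Subsingleton.elim _ _
    have hnt := nontrivial_max_triv_of_isNilpotent K (derivedSeries K S 1) V
    obtain ⟨⟨w, hw⟩, hw0⟩ := exists_ne (0 : maxTrivSubmodule K (derivedSeries K S 1) V)
    have hw' : w ∈ maxTrivSubmodule K S V := by
      rw [LieModule.mem_maxTrivSubmodule] at hw ⊢
      intro a
      exact hw ⟨a, hD ▸ LieSubmodule.mem_top a⟩
    have hne : maxTrivSubmodule K S V ≠ ⊥ := by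
      intro h
      rw [h, LieSubmodule.mem_bot] at hw'
      exact hw0 (Subtype.ext hw')
    have hv : v ∈ maxTrivSubmodule K S V := hW _ hne ▸ LieSubmodule.mem_top v
    exact hv x
  · let J := 𝔨.killingCompl
    have hc : IsCompl 𝔨 J := LieIdeal.isCompl_killingCompl 𝔨
    have hnd : ((traceForm K S V).restrict J.toSubmodule).Nondegenerate := by
      refine LinearMap.BilinForm.IsSymm.isRefl (B := (traceForm K S V).restrict J.toSubmodule)
        ⟨fun x y => traceForm_comm K S V x y⟩ |>.nondegenerate_iff_separatingLeft.mpr ?_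
      intro x hx
      have hxk : (x : S) ∈ 𝔨 := by
        rw [h𝔨]
        ext y
        have hy : y ∈ 𝔨 ⊔ J := hc.sup_eq_top ▸ LieSubmodule.mem_top y
        obtain ⟨a, ha, b, hb, rfl⟩ := LieSubmodule.mem_sup _ _ _ |>.1 hy
        rw [map_add, traceForm_comm, (h𝔨 a).1 ha]
        simpa using! hx ⟨b, hb⟩
      have : (x : S) ∈ 𝔨 ⊓ J := ⟨hxk, x.2⟩
      rw [hc.inf_eq_bot, LieSubmodule.mem_bot] at this
      exact Subtype.ext this
    obtain ⟨ι, _, e, e', hinv, hsum⟩ := invTensor_of_nondeg (W := V) J hnd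
    have hJ : (finrank K J : K) ≠ 0 := by
      have hJb : J ≠ ⊥ := by
        intro h
        rw [h] at hc
        exact hk (by simpa using hc.sup_eq_top)
      have hp : 0 < finrank K J.toSubmodule := by
        rw [Module.finrank_pos_iff, Submodule.nontrivial_iff_ne_bot]; simpa using hJb
      exact_mod_cast hp.ne'
    have hC0 : casOp (K := K) (V := V) e e' ≠ 0 := by
      intro h
      apply hJ
      rw [← hsum]
      have := congrArg (LinearMap.trace K V) h
      simpa [casOp, map_sum] using! this
    obtain ⟨g, hg⟩ := casOp_cobdry e e' hinv f hf
    let C : V →ₗ⁅K, S⁆ V := { casOp (K := K) (V := V) e e' with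
      map_lie' := fun {x m} => casOp_comm e e' hinv x m }
    have hCa : ∀ v, C v = casOp (K := K) e e' v := fun v => rfl
    have hker : C.ker = ⊥ := by
      by_contra hne
      have := hW _ hne
      apply hC0
      ext v
      have hv : v ∈ C.ker := this ▸ LieSubmodule.mem_top v
      exact (LieModuleHom.mem_ker).1 hv
    have hinj : Function.Injective (C : V →ₗ[K] V) := by
      intro a b hab
      have : a - b ∈ C.ker := by
        rw [LieModuleHom.mem_ker, map_sub, sub_eq_zero]; exact hab
      rw [hker, LieSubmodule.mem_bot, sub_eq_zero] at this
      exact this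
    let E := LinearEquiv.ofInjectiveEndo (C : V →ₗ[K] V) hinj
    have hE : ∀ v, E v = C v := fun v => rfl
    refine ⟨E.symm.toLinearMap ∘ₗ g, fun x y => ?_⟩
    apply hinj
    simp only [LieModuleHom.coe_toLinearMap, map_sub, LieModuleHom.map_lie, LinearMap.comp_apply,
      LinearEquiv.coe_coe]
    simp only [← hE, LinearEquiv.apply_symm_apply]
    exact hg x y

end Whitehead

section LeviPart
open LieModule LieAlgebra Module
set_option linter.style.haveILetI false

/-- Module structure attached to a representation. -/
@[reducible] def repLieRingModule {K S V : Type*} [Field K] [LieRing S] [LieAlgebra K S]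
    [AddCommGroup V] [Module K V] (ρ : S →ₗ[K] V →ₗ[K] V)
    (hρ : ∀ x y v, ρ ⁅x, y⁆ v = ρ x (ρ y v) - ρ y (ρ x v)) : LieRingModule S V where
  bracket x v := ρ x v
  add_lie x y v := by
    change ρ (x + y) v = ρ x v + ρ y v
    simp
  lie_add x v w := by
    change ρ x (v + w) = ρ x v + ρ x w
    simp
  leibniz_lie x y v := by
    change ρ x (ρ y v) = ρ ⁅x, y⁆ v + ρ y (ρ x v)
    rw [hρ]; abel

lemma wh2_rep {K S V : Type*} [Field K] [CharZero K] [LieRing S] [LieAlgebra K S]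
    [FiniteDimensional K S] [HasTrivialRadical K S]
    [AddCommGroup V] [Module K V] [FiniteDimensional K V] (ρ : S →ₗ[K] V →ₗ[K] V)
    (hρ : ∀ x y v, ρ ⁅x, y⁆ v = ρ x (ρ y v) - ρ y (ρ x v))
    (f : S →ₗ[K] S →ₗ[K] V) (h0 : ∀ a, f a a = 0)
    (hf : ∀ x y z, ρ x (f y z) - ρ y (f x z) + ρ z (f x y)
      - f ⁅x, y⁆ z + f ⁅x, z⁆ y - f ⁅y, z⁆ x = 0) :
    ∃ g : S →ₗ[K] V, ∀ x y, f x y = ρ x (g y) - ρ y (g x) - g ⁅x, y⁆ := by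
  letI := repLieRingModule ρ hρ
  haveI : LieModule K S V :=
    { smul_lie := fun t x v => by
        change ρ (t • x) v = t • ρ x v
        simp
      lie_smul := fun t x v => by
        change ρ x (t • v) = t • ρ x v
        simp }
  exact wh2 (finrank K V) V rfl f ⟨h0, hf⟩

lemma twoTrivial_rep {K : Type u} {L : Type v} {V : Type*} [Field K] [LieRing L] [LieAlgebra K L]
    (h2 : IsTwoTrivial K L)
    [AddCommGroup V] [Module K V] [FiniteDimensional K V] (ρ : L →ₗ[K] V →ₗ[K] V)
    (hρ : ∀ x y v, ρ ⁅x, y⁆ v = ρ x (ρ y v) - ρ y (ρ x v))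
    (f : L →ₗ[K] L →ₗ[K] V) (h0 : ∀ a, f a a = 0)
    (hf : ∀ x y z, ρ x (f y z) - ρ y (f x z) + ρ z (f x y)
      - f ⁅x, y⁆ z + f ⁅x, z⁆ y - f ⁅y, z⁆ x = 0) :
    ∃ g : L →ₗ[K] V, ∀ x y, f x y = ρ x (g y) - ρ y (g x) - g ⁅x, y⁆ := by
  let e := (Module.finBasis K V).equivFun
  let ρ' : L →ₗ[K] (Fin (finrank K V) → K) →ₗ[K] (Fin (finrank K V) → K) :=
    LinearMap.mk₂ K (fun x v => e (ρ x (e.symm v))) (by intros; simp) (by intros; simp)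
      (by intros; simp) (by intros; simp)
  have hρ'a : ∀ x v, ρ' x v = e (ρ x (e.symm v)) := fun _ _ => rfl
  have hρ' : ∀ x y v, ρ' ⁅x, y⁆ v = ρ' x (ρ' y v) - ρ' y (ρ' x v) := by
    intro x y v
    simp only [hρ'a, hρ, map_sub, LinearEquiv.symm_apply_apply]
  letI := repLieRingModule ρ' hρ'
  haveI : LieModule K L (Fin (finrank K V) → K) :=
    { smul_lie := fun t x v => by
        change ρ' (t • x) v = t • ρ' x v
        simp
      lie_smul := fun t x v => by
        change ρ' x (t • v) = t • ρ' x v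
        simp }
  obtain ⟨g, hg⟩ := h2 (Fin (finrank K V) → K) (f.compr₂ e.toLinearMap) (by
    refine ⟨fun a => by simp [h0], fun x y z => ?_⟩
    have := congrArg e (hf x y z)
    change ρ' x (e (f y z)) - ρ' y (e (f x z)) + ρ' z (e (f x y)) - e (f ⁅x, y⁆ z)
      + e (f ⁅x, z⁆ y) - e (f ⁅y, z⁆ x) = 0
    simpa only [hρ'a, LinearEquiv.symm_apply_apply, map_sub, map_add, map_zero] using this)
  refine ⟨e.symm.toLinearMap ∘ₗ g, fun x y => ?_⟩
  apply e.injective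
  have : e (f x y) = ρ' x (g y) - ρ' y (g x) - g ⁅x, y⁆ := hg x y
  rw [this]
  simp [hρ'a]

lemma levi_step {K S L : Type*} [Field K] [CharZero K] [LieRing S] [LieAlgebra K S]
    [FiniteDimensional K S] [HasTrivialRadical K S] [LieRing L] [LieAlgebra K L]
    [FiniteDimensional K L] (J J' : LieIdeal K L) (hJ : ∀ a ∈ J, ∀ b ∈ J, ⁅a, b⁆ ∈ J')
    (s : S →ₗ[K] L) (hs : ∀ x y, ⁅s x, s y⁆ - s ⁅x, y⁆ ∈ J) :
    ∃ s' : S →ₗ[K] L, (∀ x, s x - s' x ∈ J) ∧ ∀ x y, ⁅s' x, s' y⁆ - s' ⁅x, y⁆ ∈ J' := by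
  let q : L →ₗ⁅K, L⁆ L ⧸ J' := LieSubmodule.Quotient.mk' J'
  have hq0 : ∀ x, q x = 0 ↔ x ∈ J' := fun x => LieSubmodule.Quotient.mk_eq_zero J'
  let V : LieSubmodule K L (L ⧸ J') := LieSubmodule.map q J
  have hV : ∀ j ∈ J, q j ∈ V := fun j hj => (LieSubmodule.mem_map _).2 ⟨j, hj, rfl⟩
  let ρ : S →ₗ[K] V →ₗ[K] V := LinearMap.mk₂ K (fun x v => ⁅s x, v⁆)
    (by intros; simp) (by intros; simp) (by intros; simp) (by intros; simp)
  have hρa : ∀ x v, ρ x v = ⁅s x, v⁆ := fun _ _ => rfl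
  have hρ : ∀ x y v, ρ ⁅x, y⁆ v = ρ x (ρ y v) - ρ y (ρ x v) := by
    rintro x y ⟨v, hv⟩
    obtain ⟨j, hj, rfl⟩ := (LieSubmodule.mem_map _).1 hv
    simp only [hρa]
    rw [← lie_lie, ← sub_eq_zero, ← sub_lie]
    ext
    rw [LieSubmodule.coe_bracket, ← LieModuleHom.map_lie]
    apply (hq0 _).2
    apply hJ _ _ _ hj
    rw [← neg_sub]
    exact neg_mem (hs x y)
  let f : S →ₗ[K] S →ₗ[K] V := LinearMap.mk₂ K (fun x y => ⟨q (⁅s x, s y⁆ - s ⁅x, y⁆), hV _ (hs x y)⟩)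
    (by intros; ext; simp; abel) (by intros; ext; simp [smul_sub]) 
    (by intros; ext; simp; abel) (by intros; ext; simp [smul_sub])
  have hfa : ∀ x y, (f x y : L ⧸ J') = q (⁅s x, s y⁆ - s ⁅x, y⁆) := fun _ _ => rfl
  obtain ⟨g, hg⟩ := wh2_rep ρ hρ f (by intro a; ext; rw [hfa]; simp) (by
    intro x y z
    ext
    simp only [LieSubmodule.coe_add, LieSubmodule.coe_sub, hρa, LieSubmodule.coe_bracket, hfa,
      ← LieModuleHom.map_lie, LieSubmodule.coe_zero, ← map_sub, ← map_add]
    have hz2 : ⁅z, x⁆ = - ⁅x, z⁆ := (lie_skew _ _).symm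
    have hz1 : ⁅z, y⁆ = - ⁅y, z⁆ := (lie_skew _ _).symm
    have e1 : ⁅⁅x, y⁆, z⁆ = ⁅x, ⁅y, z⁆⁆ - ⁅y, ⁅x, z⁆⁆ := lie_lie _ _ _
    have e2 : ⁅⁅x, z⁆, y⁆ = - ⁅y, ⁅x, z⁆⁆ := (lie_skew _ _).symm
    have e3 : ⁅⁅y, z⁆, x⁆ = - ⁅x, ⁅y, z⁆⁆ := (lie_skew _ _).symm
    have f1 : ⁅s ⁅x, y⁆, s z⁆ = - ⁅s z, s ⁅x, y⁆⁆ := (lie_skew _ _).symm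
    have f2 : ⁅s ⁅x, z⁆, s y⁆ = - ⁅s y, s ⁅x, z⁆⁆ := (lie_skew _ _).symm
    have f3 : ⁅s ⁅y, z⁆, s x⁆ = - ⁅s x, s ⁅y, z⁆⁆ := (lie_skew _ _).symm
    have f4 : ⁅s z, ⁅s x, s y⁆⁆ = - ⁅s x, ⁅s y, s z⁆⁆ + ⁅s y, ⁅s x, s z⁆⁆ := by
      rw [← lie_skew, lie_lie]; abel
    have : ⁅s x, ⁅s y, s z⁆ - s ⁅y, z⁆⁆ - ⁅s y, ⁅s x, s z⁆ - s ⁅x, z⁆⁆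
      + ⁅s z, ⁅s x, s y⁆ - s ⁅x, y⁆⁆ - (⁅s ⁅x, y⁆, s z⁆ - s ⁅⁅x, y⁆, z⁆)
      + (⁅s ⁅x, z⁆, s y⁆ - s ⁅⁅x, z⁆, y⁆) - (⁅s ⁅y, z⁆, s x⁆ - s ⁅⁅y, z⁆, x⁆) = 0 := by
      rw [e1, e2, e3, f1, f2, f3]
      simp only [lie_sub, map_sub, map_neg, f4]
      abel
    rw [this, map_zero])
  let r : J →ₗ[K] V := LinearMap.codRestrict V.toSubmodule ((q : L →ₗ[K] L ⧸ J') ∘ₗ J.toSubmodule.subtype)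
    (fun j => hV j j.2)
  have hra : ∀ j : J, ((r j : V) : L ⧸ J') = q j := fun _ => rfl
  obtain ⟨t, ht⟩ := r.exists_rightInverse_of_surjective (by
    rw [LinearMap.range_eq_top]
    rintro ⟨v, hv⟩
    obtain ⟨j, hj, rfl⟩ := (LieSubmodule.mem_map _).1 hv
    exact ⟨⟨j, hj⟩, rfl⟩)
  have ht' : ∀ v : V, q (t v : J) = (v : L ⧸ J') := by
    intro v
    have := congrArg (fun φ => ((φ v : V) : L ⧸ J')) ht
    exact this
  let gh : S →ₗ[K] L := J.toSubmodule.subtype ∘ₗ t ∘ₗ g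
  have hgh : ∀ x, gh x ∈ J := fun x => (t (g x)).2
  have hghq : ∀ x, q (gh x) = (g x : L ⧸ J') := fun x => ht' (g x)
  refine ⟨s - gh, fun x => ?_, fun x y => ?_⟩
  · have : s x - (s - gh) x = gh x := by simp
    rw [this]; exact hgh x
  · have h := congrArg (fun v : V => (v : L ⧸ J')) (hg x y)
    simp only [hfa] at h
    rw [LieSubmodule.coe_sub, LieSubmodule.coe_sub, hρa, hρa, LieSubmodule.coe_bracket,
      LieSubmodule.coe_bracket, ← hghq, ← hghq, ← hghq, ← LieModuleHom.map_lie,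
      ← LieModuleHom.map_lie, ← map_sub, ← map_sub, ← sub_eq_zero, ← map_sub, hq0] at h
    have h' := add_mem h (hJ _ (hgh x) _ (hgh y))
    convert h' using 1
    simp only [LinearMap.sub_apply, lie_sub, sub_lie]
    rw [← lie_skew (s y) (gh x)]
    abel

lemma radical_derived (K L : Type*) [Field K] [LieRing L] [LieAlgebra K L]
    [FiniteDimensional K L] : ∃ k, derivedSeriesOfIdeal K L k (radical K L) = ⊥ := by
  haveI := (LieIdeal.solvable_iff_le_radical K L (radical K L)).2 le_rfl
  obtain ⟨k, hk⟩ := IsSolvable.solvable K (radical K L)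
  exact ⟨k, (LieIdeal.derivedSeries_eq_bot_iff _ k).1 hk⟩

lemma hasTrivialRadical_quot {K L : Type*} [Field K] [LieRing L] [LieAlgebra K L]
    [FiniteDimensional K L] : HasTrivialRadical K (L ⧸ radical K L) := by
  rw [hasTrivialRadical_iff_no_abelian_ideals]
  intro I hI
  let J : LieIdeal K L := { I.toSubmodule.comap (radical K L).toSubmodule.mkQ with
    lie_mem := by
      intro x m hm
      change LieSubmodule.Quotient.mk ⁅x, m⁆ ∈ I
      rw [LieSubmodule.Quotient.mk_bracket]
      exact lie_mem_right _ _ _ _ _ hm }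
  have hJ : ∀ x, x ∈ J ↔ LieSubmodule.Quotient.mk x ∈ I := fun _ => Iff.rfl
  have h1 : derivedSeriesOfIdeal K L 1 J ≤ radical K L := by
    rw [derivedSeriesOfIdeal_succ, derivedSeriesOfIdeal_zero, LieSubmodule.lie_le_iff]
    intro x hx y hy
    have := hI.trivial ⟨_, (hJ x).1 hx⟩ ⟨_, (hJ y).1 hy⟩
    have := congrArg (fun t : I => (t : L ⧸ radical K L)) this
    rw [← LieSubmodule.Quotient.mk_eq_zero, LieSubmodule.Quotient.mk'_apply,
      LieSubmodule.Quotient.mk_bracket]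
    exact this
  obtain ⟨k, hk⟩ := radical_derived K L
  have hs : IsSolvable J := by
    refine IsSolvable.mk (R := K) (k := k + 1) ?_
    rw [LieIdeal.derivedSeries_eq_bot_iff, eq_bot_iff, derivedSeriesOfIdeal_add, ← hk]
    exact derivedSeriesOfIdeal_mono h1 k
  have h2 := (LieIdeal.solvable_iff_le_radical K L J).1 hs
  rw [eq_bot_iff]
  intro x hx
  obtain ⟨y, rfl⟩ := LieSubmodule.Quotient.surjective_mk' _ x
  rw [LieSubmodule.mem_bot, LieSubmodule.Quotient.mk_eq_zero]
  exact h2 hx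

theorem levi {K L : Type*} [Field K] [CharZero K] [LieRing L] [LieAlgebra K L]
    [FiniteDimensional K L] :
    ∃ s : (L ⧸ radical K L) →ₗ[K] L, (∀ x, LieSubmodule.Quotient.mk (s x) = x) ∧
      ∀ x y, ⁅s x, s y⁆ = s ⁅x, y⁆ := by
  haveI : HasTrivialRadical K (L ⧸ radical K L) := hasTrivialRadical_quot
  have key : ∀ k, ∃ s : (L ⧸ radical K L) →ₗ[K] L, (∀ x, LieSubmodule.Quotient.mk (s x) = x) ∧
      ∀ x y, ⁅s x, s y⁆ - s ⁅x, y⁆ ∈ derivedSeriesOfIdeal K L k (radical K L) := by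
    intro k
    induction k with
    | zero =>
      obtain ⟨s, hs⟩ := (radical K L).toSubmodule.mkQ.exists_rightInverse_of_surjective
        (LinearMap.range_eq_top.mpr (Submodule.mkQ_surjective _))
      have hs' : ∀ x, (LieSubmodule.Quotient.mk (s x) : L ⧸ radical K L) = x :=
        fun x => congrArg (fun φ => φ x) hs
      refine ⟨s, hs', fun x y => ?_⟩
      rw [derivedSeriesOfIdeal_zero, ← LieSubmodule.Quotient.mk_eq_zero]
      change LieSubmodule.Quotient.mk ⁅s x, s y⁆ - LieSubmodule.Quotient.mk (s ⁅x, y⁆) = 0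
      rw [LieSubmodule.Quotient.mk_bracket, hs', hs', hs', sub_self]
    | succ k ih =>
      obtain ⟨s, hs1, hs2⟩ := ih
      obtain ⟨s', h1, h2⟩ := levi_step (derivedSeriesOfIdeal K L k (radical K L))
        (derivedSeriesOfIdeal K L (k+1) (radical K L)) (by
          intro a ha b hb
          rw [derivedSeriesOfIdeal_succ]
          exact LieSubmodule.lie_mem_lie ha hb) s hs2
      refine ⟨s', fun x => ?_, h2⟩
      rw [← hs1 x, eq_comm, ← sub_eq_zero, hs1]
      have : s x - s' x ∈ radical K L := derivedSeriesOfIdeal_le_self _ _ (h1 x)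
      rw [← LieSubmodule.Quotient.mk_eq_zero] at this
      rw [← this]
      nth_rewrite 1 [← hs1 x]
      rfl
  obtain ⟨k, hk⟩ := radical_derived K L
  obtain ⟨s, h1, h2⟩ := key k
  refine ⟨s, h1, fun x y => ?_⟩
  have := h2 x y
  rwa [hk, LieSubmodule.mem_bot, sub_eq_zero] at this

end LeviPart

section CentralExt
open LieModule LieAlgebra Module

lemma exists_nontrivial_cocycle {K N : Type*} [Field K] [LieRing N] [LieAlgebra K N]
    [FiniteDimensional K N] [LieRing.IsNilpotent N] (hd : 2 ≤ finrank K N) :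
    ∃ z : N →ₗ[K] N →ₗ[K] K, (∀ a, z a a = 0) ∧
      (∀ a b c, z ⁅a, b⁆ c + z ⁅b, c⁆ a + z ⁅c, a⁆ b = 0) ∧
      ¬ ∃ μ : N →ₗ[K] K, ∀ a b, z a b = μ ⁅a, b⁆ := by
  have : Nontrivial N := Module.nontrivial_of_finrank_pos (R := K) (by omega)
  have hlt := derivedSeries_lt_top_of_solvable (R := K) (L := N)
  have hlt' : (derivedSeries K N 1).toSubmodule < ⊤ := by
    rw [lt_top_iff_ne_top] at hlt ⊢
    simpa using hlt
  obtain ⟨ξ, hξ0, hξ⟩ := Submodule.exists_le_ker_of_lt_top _ hlt'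
  have hξ' : ∀ a b, ξ ⁅a, b⁆ = 0 := fun a b => hξ
    (LieSubmodule.lie_mem_lie (LieSubmodule.mem_top a) (LieSubmodule.mem_top b))
  obtain ⟨x0, hx0⟩ : ∃ x0, ξ x0 ≠ 0 := by
    by_contra h
    push Not at h
    exact hξ0 (LinearMap.ext h)
  obtain ⟨x, hx⟩ : ∃ x, ξ x = 1 := ⟨(ξ x0)⁻¹ • x0, by simp [hx0]⟩
  let I : LieIdeal K N := { LinearMap.ker ξ with lie_mem := fun {a b} _ => hξ' a b }
  have hI : ∀ a, a ∈ I ↔ ξ a = 0 := fun _ => Iff.rfl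
  have hIb : I ≠ ⊥ := by
    intro h
    have h1 := LinearMap.finrank_range_add_finrank_ker ξ
    have h2 : finrank K (LinearMap.ker ξ) = 0 := by
      have : LinearMap.ker ξ = ⊥ := by
        rw [eq_bot_iff]
        intro a ha
        have : a ∈ I := ha
        rw [h] at this
        exact this
      rw [this]; simp
    have h3 : finrank K (LinearMap.range ξ) ≤ 1 := by
      simpa using Submodule.finrank_le (LinearMap.range ξ)
    omega
  have hII : ¬ I ≤ ⁅I, I⁆ := by
    intro h
    have hall : ∀ k, I ≤ derivedSeriesOfIdeal K N k I := by
      intro k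
      induction k with
      | zero => simp
      | succ k ih =>
        rw [derivedSeriesOfIdeal_succ]
        exact h.trans (LieSubmodule.mono_lie ih ih)
    obtain ⟨k, hk⟩ := IsSolvable.solvable K I
    rw [LieIdeal.derivedSeries_eq_bot_iff] at hk
    exact hIb (eq_bot_iff.2 (hk ▸ hall k))
  obtain ⟨i0, hi0, hi0'⟩ := SetLike.not_le_iff_exists.1 hII
  obtain ⟨n0, hn0⟩ := LieModule.exists_forall_pow_toEnd_eq_zero K N N
  have hex : ∃ n, ((toEnd K N N x) ^ n) i0 ∈ ⁅I, I⁆ := ⟨n0, by rw [hn0]; exact zero_mem _⟩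
  classical
  obtain ⟨i, hi, hi', hxi⟩ : ∃ i ∈ I, i ∉ ⁅I, I⁆ ∧ ⁅x, i⁆ ∈ ⁅I, I⁆ := by
    have hs := Nat.find_spec hex
    have hm : ∀ n, ((toEnd K N N x) ^ n) i0 ∈ I := by
      intro n
      induction n with
      | zero => simpa using hi0
      | succ n ih =>
        rw [pow_succ', Module.End.mul_apply]
        exact lie_mem_right _ _ _ _ _ ih
    rcases hn : Nat.find hex with _ | n
    · rw [hn] at hs
      exact absurd (by simpa using hs) hi0'
    · refine ⟨_, hm n, Nat.find_min hex (by omega), ?_⟩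
      rw [hn, pow_succ', Module.End.mul_apply] at hs
      exact hs
  obtain ⟨lam, hl, hl'⟩ := Submodule.exists_le_ker_of_notMem (p := (⁅I, I⁆ : LieIdeal K N).toSubmodule) hi'
  have hlII : ∀ a ∈ ⁅I, I⁆, lam a = 0 := fun a ha => hl' ha
  have hid : ∀ a b, lam ⁅a, b⁆ = ξ a * lam ⁅x, b⁆ - ξ b * lam ⁅x, a⁆ := by
    intro a b
    have ha : a - ξ a • x ∈ I := by rw [hI]; simp [hx]
    have hb : b - ξ b • x ∈ I := by rw [hI]; simp [hx]
    have := hlII _ (LieSubmodule.lie_mem_lie ha hb)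
    simp only [lie_sub, sub_lie, smul_lie, lie_smul, lie_self, map_sub, map_smul, smul_eq_mul,
      ← lie_skew a x, map_neg, map_zero] at this
    linear_combination this
  let z : N →ₗ[K] N →ₗ[K] K := LinearMap.mk₂ K (fun a b => ξ a * lam b - ξ b * lam a)
    (by intros; simp; ring) (by intros; simp; ring) (by intros; simp; ring) (by intros; simp; ring)
  have hz : ∀ a b, z a b = ξ a * lam b - ξ b * lam a := fun _ _ => rfl
  refine ⟨z, fun a => by rw [hz]; ring, fun a b c => ?_, ?_⟩
  · simp only [hz, hξ', hid a b, hid b c, hid c a]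
    ring
  · rintro ⟨μ, hμ⟩
    have hμI : ∀ a ∈ ⁅I, I⁆, μ a = 0 := by
      have : ⁅I, I⁆ ≤ (⁅I, I⁆ : LieIdeal K N) ∧
        (⁅I, I⁆ : LieIdeal K N).toSubmodule ≤ LinearMap.ker μ := by
        refine ⟨le_rfl, ?_⟩
        rw [LieSubmodule.lieIdeal_oper_eq_linear_span', Submodule.span_le]
        rintro _ ⟨a, ha, b, hb, rfl⟩
        change μ ⁅a, b⁆ = 0
        rw [← hμ, hz, (hI a).1 ha, (hI b).1 hb]; ring
      exact fun a ha => this.2 ha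
    have h1 := hμ x i
    rw [hμI _ hxi, hz, hx, (hI i).1 hi] at h1
    exact hl (by simpa using h1)

end CentralExt

section Nilp
open LieModule LieAlgebra Module TensorProduct

lemma nil_closed {k L : Type*} [Field k] [CharZero k] [IsAlgClosed k] [LieRing L] [LieAlgebra k L]
    (R : LieIdeal k L) [IsSolvable R] (hR : R ≤ ⁅(⊤ : LieIdeal k L), R⁆) :
    ∀ (n : ℕ) (V : Type*) [AddCommGroup V] [Module k V] [LieRingModule L V] [LieModule k L V]
      [FiniteDimensional k V], finrank k V = n → ∀ x ∈ R, IsNilpotent (toEnd k L V x) := by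
  intro n
  induction n using Nat.strong_induction_on with
  | _ n ih =>
  intro V _ _ _ _ _ hn x hx
  rcases subsingleton_or_nontrivial V with hV | hV
  · exact ⟨1, Subsingleton.elim _ _⟩
  obtain ⟨χ, hχ⟩ := exists_nontrivial_weightSpace_of_isSolvable k R V
  let W : LieSubmodule k L V := weightSpaceOfIsLieTower k V χ
  have hW : ∀ v, v ∈ W ↔ ∀ r : R, ⁅(r : L), v⁆ = χ r • v := fun v => by
    exact (mem_weightSpace (χ := χ) (m := v) (M := V))
  obtain ⟨⟨v, hv⟩, hv0⟩ := exists_ne (0 : weightSpace V χ)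
  have hvW : v ∈ W := hv
  have hv0' : v ≠ 0 := fun h => hv0 (Subtype.ext h)
  have hχ0 : ∀ (l : L) (r : R), χ ⁅l, r⁆ = 0 := by
    intro l r
    have h1 := (hW _).1 (W.lie_mem (x := l) hvW) r
    have h2 := (hW _).1 hvW ⁅l, r⁆
    rw [(hW _).1 hvW ⁅l, r⁆ |> fun h => show ⁅(r : L), ⁅l, v⁆⁆ = ⁅l, ⁅(r : L), v⁆⁆ - ⁅((⁅l, r⁆ : R) : L), v⁆ by
      rw [LieSubmodule.coe_bracket, leibniz_lie l (r : L) v]; abel, h2, (hW _).1 hvW r, lie_smul] at h1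
    have h3 : χ ⁅l, r⁆ • v = 0 := by simpa using h1
    exact (smul_eq_zero.1 h3).resolve_right hv0'
  have hχR : ∀ r : R, χ r = 0 := by
    have : R.toSubmodule ≤ (LinearMap.ker χ).map R.toSubmodule.subtype := by
      refine le_trans ((LieSubmodule.toSubmodule_le_toSubmodule _ _).2 hR) ?_
      rw [LieSubmodule.lieIdeal_oper_eq_linear_span', Submodule.span_le]
      rintro _ ⟨l, -, r, hr, rfl⟩
      exact ⟨(⁅l, (⟨r, hr⟩ : R)⁆ : R), hχ0 l ⟨r, hr⟩, rfl⟩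
    rintro ⟨r, hr⟩
    obtain ⟨r', h1, h2⟩ := this hr
    have : r' = ⟨r, hr⟩ := Subtype.ext h2
    rw [← this]; exact h1
  have d2 : finrank k (V ⧸ W) < n := by
    have h := Submodule.finrank_quotient_add_finrank W.toSubmodule
    have hp : 0 < finrank k W.toSubmodule := by
      rw [Module.finrank_pos_iff, Submodule.nontrivial_iff_ne_bot]
      intro hb
      apply hv0'
      have : v ∈ W.toSubmodule := hvW
      rwa [hb] at this
    change finrank k (V ⧸ W.toSubmodule) < n
    omega
  obtain ⟨m, hm⟩ := ih _ d2 (V ⧸ W) rfl x hx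
  refine ⟨m + 1, ?_⟩
  ext w
  rw [pow_succ', Module.End.mul_apply]
  have hq : ∀ j, LieSubmodule.Quotient.mk' W (((toEnd k L V x) ^ j) w)
      = ((toEnd k L (V ⧸ W) x) ^ j) (LieSubmodule.Quotient.mk' W w) := by
    intro j
    induction j with
    | zero => simp
    | succ j ihj =>
      rw [pow_succ', Module.End.mul_apply, pow_succ', Module.End.mul_apply, ← ihj]
      rfl
  have h1 := hq m
  rw [hm, LinearMap.zero_apply, LieSubmodule.Quotient.mk_eq_zero, hW] at h1
  have := h1 ⟨x, hx⟩
  rw [hχR, zero_smul] at this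
  exact this

lemma nil_ideal {K L : Type*} [Field K] [CharZero K] [LieRing L] [LieAlgebra K L]
    [FiniteDimensional K L]
    (R : LieIdeal K L) [IsSolvable R] (hR : R ≤ ⁅(⊤ : LieIdeal K L), R⁆) :
    LieRing.IsNilpotent R := by
  rw [LieAlgebra.isNilpotent_iff_forall (R := K)]
  rintro ⟨x, hx⟩
  apply LieSubalgebra.isNilpotent_ad_of_isNilpotent_ad (R : LieSubalgebra K L) (x := ⟨x, hx⟩)
  let A := AlgebraicClosure K
  have hbc_inj : Function.Injective (End.baseChangeHom K A L) :=
    LinearMap.baseChangeHom_injective K L A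
  have : IsSolvable (R.baseChange A) := by
    obtain ⟨k, hk⟩ := IsSolvable.solvable K R
    rw [LieIdeal.derivedSeries_eq_bot_iff] at hk
    refine IsSolvable.mk (R := A) (k := k) ?_
    rw [LieIdeal.derivedSeries_eq_bot_iff, derivedSeriesOfIdeal_baseChange, hk,
      LieSubmodule.baseChange_bot]
  have hR' : R.baseChange A ≤ ⁅(⊤ : LieIdeal A (A ⊗[K] L)), R.baseChange A⁆ := by
    rw [← LieSubmodule.baseChange_top, ← LieSubmodule.lie_baseChange]
    exact Submodule.baseChange_mono A hR
  have key := nil_closed (R.baseChange A) hR' _ (A ⊗[K] L) rfl (1 ⊗ₜ x)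
    (Submodule.tmul_mem_baseChange_of_mem 1 hx)
  change IsNilpotent (toEnd K L L x)
  rw [← IsNilpotent.map_iff hbc_inj]
  rw [toEnd_baseChange] at key
  exact key

end Nilp

section MainPart
open LieModule LieAlgebra Module

lemma central_aux {K : Type u} {L : Type v} {N : Type*} [Field K] [LieRing L] [LieAlgebra K L]
    [LieRing N] [LieAlgebra K N] [FiniteDimensional K N] (h2 : IsTwoTrivial K L)
    (D : L →ₗ[K] N →ₗ[K] N) (hD : ∀ l m a, D ⁅l, m⁆ a = D l (D m a) - D m (D l a))
    (hder : ∀ l a b, D l ⁅a, b⁆ = ⁅D l a, b⁆ + ⁅a, D l b⁆)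
    (τ : L →ₗ[K] L) (hτ : ∀ x y, τ ⁅x, y⁆ = ⁅τ x, τ y⁆) (p : L →ₗ[K] N) (ι : N →ₗ[K] L)
    (hpR : ∀ a, p (ι a) = a) (hτ0 : ∀ a, τ (ι a) = 0) (hι : ∀ a b, ι ⁅a, b⁆ = ⁅ι a, ι b⁆)
    (hpl : ∀ x y, p ⁅x, y⁆ = D (τ x) (p y) - D (τ y) (p x) + ⁅p x, p y⁆)
    (z0 : N →ₗ[K] N →ₗ[K] K) (hz0 : ∀ a, z0 a a = 0)
    (hz0' : ∀ a b c, z0 ⁅a, b⁆ c + z0 ⁅b, c⁆ a + z0 ⁅c, a⁆ b = 0) :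
    ∃ μ : N →ₗ[K] K, ∀ a b, z0 a b = μ ⁅a, b⁆ := by
  obtain ⟨n, ⟨e⟩⟩ : ∃ n, Nonempty ((Fin n → K) ≃ₗ[K] (N →ₗ[K] N →ₗ[K] K)) :=
    ⟨_, ⟨(Module.finBasis K (N →ₗ[K] N →ₗ[K] K)).equivFun.symm⟩⟩
  let C (f : N →ₗ[K] N →ₗ[K] K) : Prop :=
    (∀ a, f a a = 0) ∧ ∀ a b c, f ⁅a, b⁆ c + f ⁅b, c⁆ a + f ⁅c, a⁆ b = 0
  let Z : Submodule K (Fin n → K) :=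
    { carrier := {f | C (e f)}
      zero_mem' := by simp [C]
      add_mem' := by
        rintro f g ⟨h1, h1'⟩ ⟨h2, h2'⟩
        refine ⟨fun a => by simp [h1, h2], fun a b c => ?_⟩
        simp only [map_add, LinearMap.add_apply]
        linear_combination h1' a b c + h2' a b c
      smul_mem' := by
        rintro t f ⟨h1, h1'⟩
        refine ⟨fun a => by simp [h1], fun a b c => ?_⟩
        simp only [map_smul, LinearMap.smul_apply, smul_eq_mul]
        linear_combination t * h1' a b c }
  let E (z : Z) : N →ₗ[K] N →ₗ[K] K := e z.1
  have hEC : ∀ z, C (E z) := fun z => z.2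
  have hEadd : ∀ z w, E (z + w) = E z + E w := fun z w => map_add e z.1 w.1
  have hEsub : ∀ z w, E (z - w) = E z - E w := fun z w => map_sub e z.1 w.1
  have hEsmul : ∀ (t : K) z, E (t • z) = t • E z := fun t z => map_smul e t z.1
  have hEinj : ∀ z w, (∀ a b, E z a b = E w a b) → z = w := by
    intro z w h
    apply Subtype.ext
    apply e.injective
    ext a b
    exact h a b
  have hEsurj : ∀ f, C f → ∃ z, E z = f := fun f hf =>
    ⟨⟨e.symm f, by change C (e (e.symm f)); rwa [e.apply_symm_apply]⟩, e.apply_symm_apply f⟩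
  clear_value E
  have hskew : ∀ f, C f → ∀ a b, f a b = - f b a := by
    rintro f ⟨h1, -⟩ a b
    have := h1 (a + b)
    simp only [map_add, LinearMap.add_apply, h1, zero_add, add_zero] at this
    linear_combination this
  let act (l : L) (f : N →ₗ[K] N →ₗ[K] K) : N →ₗ[K] N →ₗ[K] K :=
    LinearMap.mk₂ K (fun a b => - f (D l a) b - f a (D l b))
      (by intros; simp; ring) (by intros; simp; ring) (by intros; simp; ring)
      (by intros; simp; ring)
  have hact : ∀ l f a b, act l f a b = - f (D l a) b - f a (D l b) := fun _ _ _ _ => rfl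
  have hactZ : ∀ l, ∀ f, C f → C (act l f) := by
    intro l f hf
    refine ⟨fun a => ?_, fun a b c => ?_⟩
    · rw [hact, hskew f hf (D l a) a]; ring
    · simp only [hact, hder, map_add, LinearMap.add_apply]
      linear_combination - hf.2 (D l a) b c - hf.2 a (D l b) c - hf.2 a b (D l c)
  choose AZ0 hAZ0 using fun l (z : Z) => hEsurj _ (hactZ l (E z) (hEC z))
  have hAZ0' : ∀ l z a b, E (AZ0 l z) a b = - E z (D l a) b - E z a (D l b) := by
    intro l z a b
    rw [hAZ0, hact]
  let AZ : L →ₗ[K] Z →ₗ[K] Z := LinearMap.mk₂ K AZ0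
    (by intros; apply hEinj; intros; simp only [hAZ0', hEadd, LinearMap.add_apply, map_add]; ring)
    (by intros; apply hEinj; intros; simp only [hAZ0', hEsmul, LinearMap.smul_apply, map_smul]; module)
    (by intros; apply hEinj; intros; simp only [hAZ0', hEadd, LinearMap.add_apply, map_add]; ring)
    (by intros; apply hEinj; intros; simp only [hAZ0', hEsmul, LinearMap.smul_apply, map_smul]; module)
  have hAZ : ∀ l z a b, E (AZ l z) a b = - E z (D l a) b - E z a (D l b) := hAZ0'
  have hAZl : ∀ l m z, AZ ⁅l, m⁆ z = AZ l (AZ m z) - AZ m (AZ l z) := by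
    intro l m z
    apply hEinj
    intro a b
    simp only [hEsub, hAZ, hD, map_sub, LinearMap.sub_apply]
    ring
  let ρ : L →ₗ[K] Dual K Z →ₗ[K] Dual K Z := LinearMap.mk₂ K (fun x φ => - (φ ∘ₗ AZ (τ x)))
    (by intros; ext; simp; ring) (by intros; ext; simp)
    (by intros; ext; simp; ring) (by intros; ext; simp)
  have hρa : ∀ x φ z, ρ x φ z = - φ (AZ (τ x) z) := fun _ _ _ => rfl
  have hρ : ∀ x y φ, ρ ⁅x, y⁆ φ = ρ x (ρ y φ) - ρ y (ρ x φ) := by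
    intro x y φ
    ext z
    rw [LinearMap.sub_apply]
    simp only [hρa, hτ, hAZl, map_sub]
    ring
  let F0 (a b : N) : Dual K Z :=
    { toFun := fun z => E z a b
      map_add' := fun _ _ => by simp [hEadd]
      map_smul' := fun _ _ => by simp [hEsmul] }
  let F : L →ₗ[K] L →ₗ[K] Dual K Z := LinearMap.mk₂ K (fun x y => F0 (p x) (p y))
    (by intros; ext; simp [F0]) (by intros; ext; simp [F0])
    (by intros; ext; simp [F0]) (by intros; ext; simp [F0])
  have hF : ∀ x y z, F x y z = E z (p x) (p y) := fun _ _ _ => rfl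
  obtain ⟨g, hg⟩ := twoTrivial_rep h2 ρ hρ F
    (by intro a; ext z; rw [hF]; exact (hEC z).1 _)
    (by
      intro x y w
      ext z
      simp only [LinearMap.sub_apply, LinearMap.add_apply, hρa, hF, hAZ, hpl, map_sub, map_add,
        LinearMap.zero_apply]
      have e1 := hskew (E z) (hEC z) (p y) (D (τ x) (p w))
      have e2 := hskew (E z) (hEC z) (p x) (D (τ y) (p w))
      have e3 := hskew (E z) (hEC z) (p x) (D (τ w) (p y))
      have e4 := (hEC z).2 (p x) (p y) (p w)
      have e5 : ⁅p w, p x⁆ = - ⁅p x, p w⁆ := (lie_skew _ _).symm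
      rw [e5, map_neg, LinearMap.neg_apply] at e4
      linear_combination e1 - e2 + e3 - e4)
  obtain ⟨zz, hzz⟩ := hEsurj z0 ⟨hz0, hz0'⟩
  refine ⟨- ((Dual.eval K Z zz) ∘ₗ g ∘ₗ ι), fun a b => ?_⟩
  have h := congrArg (fun φ : Dual K Z => φ zz) (hg (ι a) (ι b))
  simp only [hF, hpR, hzz, LinearMap.sub_apply, hρa, hτ0, map_zero,
    LinearMap.zero_apply] at h
  have h' : z0 a b = - 0 - - 0 - g ⁅ι a, ι b⁆ zz := h
  rw [h', ← hι]
  simp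

lemma central_trivial {K : Type u} {L : Type v} [Field K] [LieRing L] [LieAlgebra K L]
    [FiniteDimensional K L] (h2 : IsTwoTrivial K L) (R : LieIdeal K L)
    (τ : L →ₗ[K] L) (hτ : ∀ x y, τ ⁅x, y⁆ = ⁅τ x, τ y⁆) (hτR : ∀ x, x - τ x ∈ R)
    (hτ0 : ∀ x ∈ R, τ x = 0) (z0 : R →ₗ[K] R →ₗ[K] K) (hz0 : ∀ a, z0 a a = 0)
    (hz0' : ∀ a b c, z0 ⁅a, b⁆ c + z0 ⁅b, c⁆ a + z0 ⁅c, a⁆ b = 0) :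
    ∃ μ : R →ₗ[K] K, ∀ a b, z0 a b = μ ⁅a, b⁆ := by
  have hbr : ∀ a b : R, ((⁅a, b⁆ : R) : L) = ⁅(a : L), (b : L)⁆ := fun _ _ => rfl
  let p : L →ₗ[K] R := LinearMap.codRestrict R.toSubmodule (LinearMap.id - τ) hτR
  have hp : ∀ x, ((p x : R) : L) = x - τ x := fun _ => rfl
  have hpR : ∀ a : R, p a = a := fun a => Subtype.ext (by rw [hp, hτ0 _ a.2, sub_zero])
  let D : L →ₗ[K] R →ₗ[K] R := LinearMap.mk₂ K (fun l a => ⁅l, a⁆)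
    (by intros; simp) (by intros; simp) (by intros; simp) (by intros; simp)
  have hDa : ∀ l a, D l a = ⁅l, a⁆ := fun _ _ => rfl
  refine central_aux h2 D (fun l m a => ?_) (fun l a b => ?_) τ hτ p R.toSubmodule.subtype hpR
    (fun a => hτ0 _ a.2) (fun _ _ => rfl) (fun x y => ?_) z0 hz0 hz0'
  · simp only [hDa, lie_lie]
  · apply Subtype.ext
    simp only [hDa, LieSubmodule.coe_add, LieSubmodule.coe_bracket, hbr]
    exact leibniz_lie _ _ _
  · apply Subtype.ext
    simp only [hDa]
    rw [LieSubmodule.coe_add, LieSubmodule.coe_sub, LieSubmodule.coe_bracket,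
      LieSubmodule.coe_bracket, hbr, hp, hp, hp, hτ]
    simp only [lie_sub, sub_lie]
    rw [← lie_skew (τ y) x, ← lie_skew (τ y) (τ x)]
    abel

end MainPart

/-- A 2-trivial Lie algebra `L` over a field of characteristic zero with `⁅L, L⁆ = L`
is semisimple (its solvable radical is zero). -/
theorem isTwoTrivial_perfect_semisimple
    (K : Type u) (L : Type v) [Field K] [CharZero K]
    [LieRing L] [LieAlgebra K L] [FiniteDimensional K L]
    (h2 : IsTwoTrivial K L)
    (hperf : ⁅(⊤ : LieIdeal K L), (⊤ : LieIdeal K L)⁆ = (⊤ : LieIdeal K L)) :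
    LieAlgebra.radical K L = ⊥ := by
  classical
  obtain ⟨s, hs1, hs2⟩ := levi (K := K) (L := L)
  by_contra hne
  let R := LieAlgebra.radical K L
  have hsol : LieAlgebra.IsSolvable R := (LieAlgebra.LieIdeal.solvable_iff_le_radical K L R).2 le_rfl
  let τ : L →ₗ[K] L := s ∘ₗ R.toSubmodule.mkQ
  have hτa : ∀ x, τ x = s (LieSubmodule.Quotient.mk x) := fun _ => rfl
  have hτ : ∀ x y, τ ⁅x, y⁆ = ⁅τ x, τ y⁆ := by
    intro x y
    rw [hτa, hτa, hτa, hs2, LieSubmodule.Quotient.mk_bracket]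
  have hτR : ∀ x, x - τ x ∈ R := by
    intro x
    rw [← LieSubmodule.Quotient.mk_eq_zero]
    change LieSubmodule.Quotient.mk x - LieSubmodule.Quotient.mk (τ x) = 0
    rw [hτa, hs1, sub_self]
  have hτ0 : ∀ x ∈ R, τ x = 0 := by
    intro x hx
    have : (LieSubmodule.Quotient.mk x : L ⧸ R) = 0 := (LieSubmodule.Quotient.mk_eq_zero R).2 hx
    rw [hτa, this, map_zero]
  -- every element of `L` is in the span of brackets
  have hspan : ∀ P : Submodule K L, (∀ x y : L, ⁅x, y⁆ ∈ P) → ∀ x, x ∈ P := by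
    intro P hP x
    have hx : x ∈ (⁅(⊤ : LieIdeal K L), (⊤ : LieIdeal K L)⁆ : LieIdeal K L).toSubmodule := by
      rw [hperf]; exact LieSubmodule.mem_top x
    rw [LieSubmodule.lieIdeal_oper_eq_linear_span'] at hx
    refine Submodule.span_le.2 ?_ hx
    rintro _ ⟨a, -, b, -, rfl⟩
    exact hP a b
  have hRR : R ≤ ⁅(⊤ : LieIdeal K L), R⁆ := by
    have h := hspan ((⁅(⊤ : LieIdeal K L), R⁆ : LieIdeal K L).toSubmodule.comap
      (LinearMap.id - τ)) (by
        intro x y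
        change ⁅x, y⁆ - τ ⁅x, y⁆ ∈ ⁅(⊤ : LieIdeal K L), R⁆
        have e : ⁅x, y⁆ - τ ⁅x, y⁆ = ⁅τ x, y - τ y⁆ - ⁅y, x - τ x⁆ := by
          rw [hτ, lie_sub, lie_sub, ← lie_skew y x, ← lie_skew y (τ x)]; abel
        rw [e]
        exact sub_mem (LieSubmodule.lie_mem_lie (LieSubmodule.mem_top _) (hτR y))
          (LieSubmodule.lie_mem_lie (LieSubmodule.mem_top _) (hτR x)))
    intro r hr
    have := h r
    change r - τ r ∈ ⁅(⊤ : LieIdeal K L), R⁆ at this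
    rwa [hτ0 r hr, sub_zero] at this
  have hnil : LieRing.IsNilpotent R := nil_ideal R hRR
  have hdim : 2 ≤ Module.finrank K R := by
    by_contra hlt
    have h1 : Module.finrank K R ≤ 1 := by omega
    obtain ⟨x0, hx0⟩ := finrank_le_one_iff.1 h1
    have hc : ∀ l : L, ∃ c : K, c • (x0 : L) = ⁅l, (x0 : L)⁆ := by
      intro l
      obtain ⟨c, hc⟩ := hx0 ⁅l, x0⁆
      exact ⟨c, congrArg (fun t : R => (t : L)) hc⟩
    have hz : ∀ l : L, ⁅l, (x0 : L)⁆ = 0 := by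
      intro l
      have := hspan (LinearMap.ker ((LieAlgebra.ad K L (x0 : L)))) (by
        intro x y
        rw [LinearMap.mem_ker, LieAlgebra.ad_apply, ← lie_skew, neg_eq_zero, lie_lie]
        obtain ⟨c, hc1⟩ := hc x
        obtain ⟨d, hd1⟩ := hc y
        rw [← hc1, ← hd1, lie_smul, lie_smul, ← hc1, ← hd1, smul_comm, sub_self]) l
      rw [LinearMap.mem_ker, LieAlgebra.ad_apply, ← lie_skew, neg_eq_zero] at this
      exact this
    apply hne
    rw [eq_bot_iff]
    refine hRR.trans ?_
    rw [LieSubmodule.lie_le_iff]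
    intro x _ m hm
    obtain ⟨c, hc1⟩ := hx0 ⟨m, hm⟩
    have : c • (x0 : L) = m := congrArg (fun t : R => (t : L)) hc1
    rw [← this, lie_smul, hz, smul_zero]
    exact zero_mem _
  obtain ⟨z0, ha, hb, hcn⟩ := exists_nontrivial_cocycle (K := K) (N := R) hdim
  exact hcn (central_trivial h2 R τ hτ hτR hτ0 z0 ha hb)
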